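/- Let p_H, p_V satisfy 1/2 < p_H < 1 and 0 < p_V < 1 − p_H. Then the two-letter coherent information of the generalized erasure channel of the polarization dependent loss operation is strictly superadditive: sup over 4×4 density matrices ρ of [S((Γ⊗Γ)(ρ)) − S((Γ̃⊗Γ̃)(ρ))] > 2 · (sup over 2×2 density matrices σ of [S(Γ(σ)) − S(Γ̃(σ))]). -/

import Mathlib

open Matrix ComplexOrder Kronecker

/-- The von Neumann entropy S(ρ) = Σ_i −λ_i log λ_i over the eigenvalues of a Hermitian
matrix (and 0 on non-Hermitian matrices). Natural logarithm, 0 log 0 = 0. -/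
noncomputable def vnEnt {n : Type*} [Fintype n] [DecidableEq n] (ρ : Matrix n n ℂ) : ℝ :=
  if h : ρ.IsHermitian then ∑ i, -(h.eigenvalues i * Real.log (h.eigenvalues i)) else 0

/-- The generalized erasure channel of the polarization dependent loss operation. -/
noncomputable def GammaPDL (pH pV : ℝ) (ρ : Matrix (Fin 2) (Fin 2) ℂ) :
    Matrix (Fin 3) (Fin 3) ℂ :=
  !![(pH : ℂ) * ρ 0 0, (Real.sqrt (pH * pV) : ℂ) * ρ 0 1, 0;
     (Real.sqrt (pH * pV) : ℂ) * ρ 1 0, (pV : ℂ) * ρ 1 1, 0;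
     0, 0, ρ.trace - (pH : ℂ) * ρ 0 0 - (pV : ℂ) * ρ 1 1]

/-- The complementary channel of the generalized erasure channel of the polarization
dependent loss operation. -/
noncomputable def GammaPDLc (pH pV : ℝ) (ρ : Matrix (Fin 2) (Fin 2) ℂ) :
    Matrix (Fin 3) (Fin 3) ℂ :=
  !![(pH : ℂ) * ρ 0 0 + (pV : ℂ) * ρ 1 1, 0, 0;
     0, ((1 - pH : ℝ) : ℂ) * ρ 0 0, (Real.sqrt ((1 - pH) * (1 - pV)) : ℂ) * ρ 0 1;
     0, (Real.sqrt ((1 - pH) * (1 - pV)) : ℂ) * ρ 1 0, ((1 - pV : ℝ) : ℂ) * ρ 1 1]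

/-- Kraus operators of the generalized erasure channel of the polarization dependent loss
operation. -/
noncomputable def KrPDL (pH pV : ℝ) : Fin 3 → Matrix (Fin 3) (Fin 2) ℂ :=
  ![!![(Real.sqrt pH : ℂ), 0; 0, (Real.sqrt pV : ℂ); 0, 0],
    !![0, 0; 0, 0; (Real.sqrt (1 - pH) : ℂ), 0],
    !![0, 0; 0, 0; 0, (Real.sqrt (1 - pV) : ℂ)]]

/-- Kraus operators of the complementary channel of the generalized erasure channel of the
polarization dependent loss operation. -/
noncomputable def LrPDL (pH pV : ℝ) : Fin 3 → Matrix (Fin 3) (Fin 2) ℂ :=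
  ![!![(Real.sqrt pH : ℂ), 0; 0, 0; 0, 0],
    !![0, (Real.sqrt pV : ℂ); 0, 0; 0, 0],
    !![0, 0; (Real.sqrt (1 - pH) : ℂ), 0; 0, (Real.sqrt (1 - pV) : ℂ)]]

/-!
Let `Λ` and `Λᶜ` denote the loss operations with transmissivities `(pH, pV)` and `(1 - pH, 1 - pV)`.
The channel `Γ` outputs `Λ σ` next to the weight `tr (Λᶜ σ)`, and its complement outputs `Λᶜ σ` next
to `tr (Λ σ)`, so the coherent information of `σ` is the entropy of `Λ σ` given its weight minus
that of `Λᶜ σ` given its weight. At fixed determinant such a conditional entropy decreases with the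
trace, hence a diagonal input `diag (a, 1 - a)` is optimal. Its coherent information vanishes at
`a = 0, 1` and behaves like `-(2 pH - 1) a log a` near `0`, so the optimal `a` is interior.

With two letters, make the levels `|HV⟩` and `|VH⟩` of the product of two such optimal inputs
coherent. This lowers the entropy by `2 a (1 - a) pH pV log 2` at the receiver, but by
`2 a (1 - a) (1 - pH) (1 - pV) log 2` in the environment. The net gain is
`2 a (1 - a) (1 - pH - pV) log 2 > 0`.
-/

open Real (negMulLog)
open scoped Topology

theorem sum_negMulLog_mul {m n : Type*} [Fintype m] [Fintype n] {d : m → ℝ} {e : n → ℝ}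
    (hd : ∑ i, d i = 1) (he : ∑ j, e j = 1) :
    ∑ i : m × n, negMulLog (d i.1 * e i.2) = ∑ i, negMulLog (d i) + ∑ j, negMulLog (e j) := by
  simp only [Fintype.sum_prod_type, Real.negMulLog_mul, Finset.sum_add_distrib, ← Finset.sum_mul,
    ← Finset.mul_sum, hd, he, one_mul]

section Entropy

variable {m n : Type*} [DecidableEq m] [DecidableEq n]

theorem isHermitian_diagonal_ofReal (f : n → ℝ) :
    (diagonal fun i => (f i : ℂ)).IsHermitian :=
  isHermitian_diagonal_iff.mpr fun i => Complex.conj_ofReal (f i)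

theorem isHermitian_diagonal_add_single (f : n → ℝ) (p q : n) (c : ℝ) :
    (diagonal (fun i => (f i : ℂ)) + (single p q (c : ℂ) + single q p (c : ℂ))).IsHermitian := by
  refine (isHermitian_diagonal_ofReal f).add ?_
  simp [IsHermitian, conjTranspose_single, add_comm]

variable [Fintype m] [Fintype n] {A : Matrix n n ℂ}

theorem vnEnt_eq_sum_negMulLog (hA : A.IsHermitian) :
    vnEnt A = ∑ i, negMulLog (hA.eigenvalues i) := by
  simp only [vnEnt, dif_pos hA, negMulLog, neg_mul]

theorem vnEnt_eq_of_charpoly_eq (hA : A.IsHermitian) (f : n → ℝ)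
    (h : A.charpoly = ∏ i, (Polynomial.X - Polynomial.C (f i : ℂ))) :
    vnEnt A = ∑ i, negMulLog (f i) := by
  have roots_eq : A.charpoly.roots = Finset.univ.val.map fun i => (f i : ℂ) := by
    rw [h, Polynomial.roots_prod _ _
      (Finset.prod_ne_zero_iff.mpr fun i _ => Polynomial.X_sub_C_ne_zero _)]
    simp
  have spectra_eq := hA.roots_charpoly_eq_eigenvalues.symm.trans roots_eq
  have := congrArg (fun s => (s.map fun z : ℂ => negMulLog z.re).sum) spectra_eq
  simpa [vnEnt_eq_sum_negMulLog hA, Function.comp_def] using this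

theorem vnEnt_eq_of_mul_eq_mul_diagonal (hA : A.IsHermitian) {U V : Matrix n n ℂ}
    (hVU : V * U = 1) (f : n → ℝ) (h : A * U = U * diagonal fun i => (f i : ℂ)) :
    vnEnt A = ∑ i, negMulLog (f i) := by
  refine vnEnt_eq_of_charpoly_eq hA f ?_
  have hA_eq : A = U * (diagonal (fun i => (f i : ℂ)) * V) := by
    rw [← mul_assoc, ← h, mul_assoc, mul_eq_one_comm.mp hVU, mul_one]
  rw [hA_eq, charpoly_mul_comm, mul_assoc, hVU, mul_one, charpoly_diagonal]

theorem vnEnt_diagonal (f : n → ℝ) :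
    vnEnt (diagonal fun i => (f i : ℂ)) = ∑ i, negMulLog (f i) :=
  vnEnt_eq_of_charpoly_eq (isHermitian_diagonal_ofReal f) f (charpoly_diagonal _)

theorem vnEnt_reindex (hA : A.IsHermitian) (e : n ≃ m) :
    vnEnt (reindex e e A) = vnEnt A := by
  rw [vnEnt_eq_sum_negMulLog hA,
    vnEnt_eq_of_charpoly_eq (hA.reindex e) (hA.eigenvalues ∘ e.symm)]
  · exact e.symm.sum_comp fun i => negMulLog (hA.eigenvalues i)
  · rw [charpoly_reindex, hA.charpoly_eq]
    exact (e.symm.prod_comp fun i =>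
      Polynomial.X - Polynomial.C (hA.eigenvalues i : ℂ)).symm

theorem vnEnt_fromBlocks_zero {B : Matrix m m ℂ} (hA : A.IsHermitian) (hB : B.IsHermitian) :
    vnEnt (fromBlocks A 0 0 B) = vnEnt A + vnEnt B := by
  rw [vnEnt_eq_sum_negMulLog hA, vnEnt_eq_sum_negMulLog hB,
    vnEnt_eq_of_charpoly_eq (hA.fromBlocks (by simp) hB) (Sum.elim hA.eigenvalues hB.eigenvalues)]
  · simp
  · simp [hA.charpoly_eq, hB.charpoly_eq]

theorem vnEnt_le_card (hA : A.PosSemidef) : vnEnt A ≤ Fintype.card n := by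
  rw [vnEnt_eq_sum_negMulLog hA.isHermitian, ← Finset.card_univ, ← nsmul_one]
  refine Finset.sum_le_card_nsmul _ _ _ fun i _ => ?_
  have hi := hA.eigenvalues_nonneg i
  linarith [Real.negMulLog_le_one_sub_self hi]

theorem vnEnt_nonneg (hA : A.PosSemidef) (htr : A.trace = 1) : 0 ≤ vnEnt A := by
  have hsum : ∑ i, hA.isHermitian.eigenvalues i = 1 := by
    simpa using congrArg Complex.re (hA.isHermitian.trace_eq_sum_eigenvalues.symm.trans htr)
  rw [vnEnt_eq_sum_negMulLog hA.isHermitian]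
  refine Finset.sum_nonneg fun i _ => Real.negMulLog_nonneg (hA.eigenvalues_nonneg i) ?_
  rw [← hsum]
  exact Finset.single_le_sum (fun j _ => hA.eigenvalues_nonneg j) (Finset.mem_univ i)

theorem exists_eigenvalues_fin_two {A : Matrix (Fin 2) (Fin 2) ℂ} (hA : A.PosSemidef) :
    ∃ x y : ℝ, 0 ≤ x ∧ x ≤ y ∧ A.trace = (x + y : ℝ) ∧ A.det = (x * y : ℝ) ∧
      vnEnt A = negMulLog x + negMulLog y := by
  have htr := hA.isHermitian.trace_eq_sum_eigenvalues
  have hdet := hA.isHermitian.det_eq_prod_eigenvalues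
  have hent := vnEnt_eq_sum_negMulLog hA.isHermitian
  have h0 := hA.eigenvalues_nonneg
  simp only [Fin.sum_univ_two, Fin.prod_univ_two] at htr hdet hent
  rcases le_total (hA.isHermitian.eigenvalues 0) (hA.isHermitian.eigenvalues 1) with h | h
  · exact ⟨_, _, h0 0, h, by simpa using htr, by simpa using hdet, hent⟩
  · exact ⟨_, _, h0 1, h, by simpa [add_comm] using htr, by simpa [mul_comm] using hdet,
      hent.trans (add_comm _ _)⟩

theorem transvection_mul_transvection_mul_inv {R : Type*} [CommRing R] {p q : n} (hpq : p ≠ q)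
    (a b : R) :
    (transvection p q a * transvection q p b) *
      (transvection q p (-b) * transvection p q (-a)) = 1 := by
  rw [mul_assoc, ← mul_assoc (transvection q p _),
    transvection_mul_transvection_same _ _ hpq.symm, add_neg_cancel, transvection_zero, one_mul,
    transvection_mul_transvection_same _ _ hpq, add_neg_cancel, transvection_zero]

-- On the span of `e_p` and `e_q` the matrix is `c` times the all-ones matrix, with
-- eigenvalues `2c` and `0`; the two transvections diagonalize it.
theorem diagonal_add_single_mul_transvection {K : Type*} [Field K] [CharZero K] {f g : n → K}
    {p q : n} (hpq : p ≠ q) {c : K} (f_p : f p = c) (f_q : f q = c) (g_p : g p = 2 * c)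
    (g_q : g q = 0) (g_of_ne : ∀ i, i ≠ p ∧ i ≠ q → g i = f i) :
    (diagonal f + (single p q c + single q p c)) *
        (transvection q p 1 * transvection p q (-(1 / 2))) =
      transvection q p 1 * transvection p q (-(1 / 2)) * diagonal g := by
  simp only [transvection, mul_add, add_mul, one_mul, mul_one, single_mul_single_same,
    single_mul_single_of_ne _ _ _ _ hpq, single_mul_single_of_ne _ _ _ _ hpq.symm]
  ext i j
  simp only [Matrix.add_apply, single_apply, Matrix.zero_apply, diagonal_mul, mul_diagonal,
    diagonal_apply]
  grind

theorem vnEnt_diagonal_add_single {f : n → ℝ} {p q : n} (hpq : p ≠ q) {c : ℝ}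
    (hp : f p = c) (hq : f q = c) :
    vnEnt (diagonal (fun i => (f i : ℂ)) + (single p q (c : ℂ) + single q p (c : ℂ)))
      = ∑ i, negMulLog (f i) - 2 * c * Real.log 2 := by
  let g : n → ℝ := Function.update (Function.update f p (2 * c)) q 0
  have g_p : g p = 2 * c := by simp [g, hpq]
  have g_q : g q = 0 := by simp [g]
  have g_of_ne : ∀ i, i ≠ p ∧ i ≠ q → g i = f i := fun i hi => by simp [g, hi.1, hi.2]
  have hsum : ∑ i, (negMulLog (g i) - negMulLog (f i)) = -(2 * c * Real.log 2) := by
    rw [Fintype.sum_eq_add p q hpq fun i hi => by rw [g_of_ne i hi, sub_self], g_p, g_q, hp, hq,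
      Real.negMulLog_mul, Real.negMulLog_zero, negMulLog]
    ring
  have hdiag := diagonal_add_single_mul_transvection (f := fun i => (f i : ℂ))
    (g := fun i => (g i : ℂ)) (c := (c : ℂ)) hpq (by rw [hp]) (by rw [hq]) (by simp [g_p])
    (by simp [g_q]) (fun i hi => by rw [g_of_ne i hi])
  rw [vnEnt_eq_of_mul_eq_mul_diagonal (isHermitian_diagonal_add_single f p q c)
    (by simpa using transvection_mul_transvection_mul_inv hpq (1 / 2 : ℂ) (-1)) g hdiag]
  rw [Finset.sum_sub_distrib] at hsum
  linarith

end Entropy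

section ScaledBinEntropy

/-- The unnormalized binary entropy `(x + y) * binEntropy (x / (x + y))` of a pair of
nonnegative weights: the entropy that remains once the total weight `x + y` is known. -/
noncomputable def scaledBinEntropy (x y : ℝ) : ℝ :=
  negMulLog x + negMulLog y - negMulLog (x + y)

theorem scaledBinEntropy_comm (x y : ℝ) : scaledBinEntropy x y = scaledBinEntropy y x := by
  rw [scaledBinEntropy, scaledBinEntropy, add_comm x, add_comm (negMulLog x)]

theorem scaledBinEntropy_zero_left (y : ℝ) : scaledBinEntropy 0 y = 0 := by
  simp [scaledBinEntropy]

theorem scaledBinEntropy_eq_mul_log (x y : ℝ) :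
    scaledBinEntropy x y =
      x * (Real.log (x + y) - Real.log x) + y * (Real.log (x + y) - Real.log y) := by
  simp only [scaledBinEntropy, negMulLog]
  ring

theorem le_scaledBinEntropy {x y : ℝ} (hx : 0 ≤ x) (hy : 0 < y) :
    x * (Real.log (x + y) - Real.log x) ≤ scaledBinEntropy x y := by
  have hlog : Real.log y ≤ Real.log (x + y) := Real.log_le_log hy (by linarith)
  rw [scaledBinEntropy_eq_mul_log]
  exact le_add_of_nonneg_right (mul_nonneg hy.le (sub_nonneg.mpr hlog))

theorem scaledBinEntropy_le {x y : ℝ} (hx : 0 ≤ x) (hy : 0 < y) :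
    scaledBinEntropy x y ≤ x * (Real.log (x + y) - Real.log x + 1) := by
  have hlog : Real.log (x + y) - Real.log y ≤ x / y := by
    rw [← Real.log_div (by positivity) hy.ne']
    refine (Real.log_le_sub_one_of_pos (by positivity)).trans_eq ?_
    field_simp
    ring
  have hmul : y * (Real.log (x + y) - Real.log y) ≤ x := by
    simpa [mul_div_cancel₀ _ hy.ne'] using mul_le_mul_of_nonneg_left hlog hy.le
  rw [scaledBinEntropy_eq_mul_log]
  linarith

theorem hasDerivAt_scaledBinEntropy_div {D x : ℝ} (hD : 0 < D) (hx : 0 < x) :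
    HasDerivAt (fun t => scaledBinEntropy t (D / t))
      (D / x ^ 2 * Real.log (D / x ^ 2) + (1 - D / x ^ 2) * Real.log (1 + D / x ^ 2)) x := by
  have hdiv : HasDerivAt (fun t : ℝ => D / t) (-(D / x ^ 2)) x := by
    simpa [div_eq_mul_inv] using (hasDerivAt_inv hx.ne').const_mul D
  have hderiv := ((Real.hasDerivAt_negMulLog hx.ne').add
    ((Real.hasDerivAt_negMulLog (div_pos hD hx).ne').comp x hdiv)).sub
    ((Real.hasDerivAt_negMulLog (add_pos hx (div_pos hD hx)).ne').comp x
      ((hasDerivAt_id x).add hdiv))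
  refine hderiv.congr_deriv ?_
  have hlog_sum : Real.log (x + D / x) = Real.log x + Real.log (1 + D / x ^ 2) := by
    rw [← Real.log_mul hx.ne' (by positivity)]
    congr 1
    field_simp
  have hlog_div : Real.log (D / x) = Real.log x + Real.log (D / x ^ 2) := by
    rw [← Real.log_mul hx.ne' (by positivity)]
    congr 1
    field_simp
  rw [hlog_sum, hlog_div]
  ring

theorem antitoneOn_scaledBinEntropy_div {D : ℝ} (hD : 0 < D) :
    AntitoneOn (fun t => scaledBinEntropy t (D / t)) (Set.Ici (√D)) := by
  have hpos : ∀ t ∈ Set.Ici (√D), 0 < t := fun t ht => (Real.sqrt_pos.mpr hD).trans_le ht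
  refine antitoneOn_of_hasDerivWithinAt_nonpos (convex_Ici _)
    (fun t ht => (hasDerivAt_scaledBinEntropy_div hD (hpos t ht)).continuousAt.continuousWithinAt)
    (fun t ht => (hasDerivAt_scaledBinEntropy_div hD
      (hpos t (interior_subset ht))).hasDerivWithinAt) fun t ht => ?_
  have ht0 := hpos t (interior_subset ht)
  have hu0 : 0 < D / t ^ 2 := by positivity
  have hu1 : D / t ^ 2 ≤ 1 := by
    rw [div_le_one (by positivity)]
    exact (Real.sqrt_le_left ht0.le).mp (interior_subset ht)
  -- With `u = D / t²`, the derivative is at most `u (u - 1) + (1 - u) u = 0`.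
  have hlog_u : Real.log (D / t ^ 2) ≤ D / t ^ 2 - 1 := Real.log_le_sub_one_of_pos hu0
  have hlog_one_add : Real.log (1 + D / t ^ 2) ≤ D / t ^ 2 := by
    linarith [Real.log_le_sub_one_of_pos (show 0 < 1 + D / t ^ 2 by positivity)]
  linarith [mul_le_mul_of_nonneg_left hlog_u hu0.le,
    mul_le_mul_of_nonneg_left hlog_one_add (sub_nonneg.mpr hu1)]

theorem scaledBinEntropy_le_of_mul_eq_of_add_le_of_le {x y x' y' : ℝ} (hx : 0 ≤ x) (hx' : 0 ≤ x')
    (hxy : x ≤ y) (hxy' : x' ≤ y') (hmul : x * y = x' * y') (hadd : x + y ≤ x' + y') :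
    scaledBinEntropy x' y' ≤ scaledBinEntropy x y := by
  rcases hx.eq_or_lt with rfl | hx_pos
  · have hx'_zero : x' = 0 := by nlinarith
    rw [hx'_zero, scaledBinEntropy_zero_left, scaledBinEntropy_zero_left]
  have hy_pos : 0 < y := hx_pos.trans_le hxy
  have hyy' : y ≤ y' := by
    by_contra! hlt
    nlinarith [mul_pos (sub_pos.mpr (hxy'.trans_lt hlt)) (sub_pos.mpr hlt),
      mul_le_mul_of_nonneg_left hadd hy_pos.le]
  have hsqrt : √(x * y) ≤ y := (Real.sqrt_le_left hy_pos.le).mpr (by nlinarith)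
  have key := antitoneOn_scaledBinEntropy_div (mul_pos hx_pos hy_pos) hsqrt
    (hsqrt.trans hyy') hyy'
  simp only at key
  rwa [mul_div_cancel_right₀ _ hy_pos.ne', hmul,
    mul_div_cancel_right₀ _ (hy_pos.trans_le hyy').ne', scaledBinEntropy_comm y',
    scaledBinEntropy_comm y] at key

theorem scaledBinEntropy_le_of_mul_eq_of_add_le {x y x' y' : ℝ} (hx : 0 ≤ x) (hy : 0 ≤ y)
    (hx' : 0 ≤ x') (hy' : 0 ≤ y') (hmul : x * y = x' * y') (hadd : x + y ≤ x' + y') :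
    scaledBinEntropy x' y' ≤ scaledBinEntropy x y := by
  wlog hxy : x ≤ y generalizing x y
  · rw [scaledBinEntropy_comm x]
    exact this hy hx (by linarith) (by linarith) (le_of_not_ge hxy)
  wlog hxy' : x' ≤ y' generalizing x' y'
  · rw [scaledBinEntropy_comm x']
    exact this hy' hx' (by linarith) (by linarith) (le_of_not_ge hxy')
  exact scaledBinEntropy_le_of_mul_eq_of_add_le_of_le hx hx' hxy hxy' hmul hadd

end ScaledBinEntropy

section DiagCoherentInfo

/-- The coherent information `S (Γ σ) - S (Γ̃ σ)` of the diagonal input `σ = diag (a, 1 - a)`. -/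
noncomputable def diagCoherentInfo (pH pV a : ℝ) : ℝ :=
  scaledBinEntropy (pH * a) (pV * (1 - a)) - scaledBinEntropy ((1 - pH) * a) ((1 - pV) * (1 - a))

variable {pH pV : ℝ}

theorem continuous_diagCoherentInfo : Continuous (diagCoherentInfo pH pV) := by
  unfold diagCoherentInfo scaledBinEntropy
  fun_prop

theorem diagCoherentInfo_zero : diagCoherentInfo pH pV 0 = 0 := by
  simp [diagCoherentInfo, scaledBinEntropy_zero_left]

theorem diagCoherentInfo_one : diagCoherentInfo pH pV 1 = 0 := by
  simp [diagCoherentInfo, scaledBinEntropy_comm _ 0, scaledBinEntropy_zero_left]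

theorem le_diagCoherentInfo {a : ℝ} (hV : 0 < pV) (hVH : pV ≤ pH) (hH : pH < 1) (ha : 0 < a)
    (ha1 : a < 1) :
    a * (pH * (Real.log pV - Real.log pH) + (1 - pH) * (Real.log (1 - pH) - 1)
      - (2 * pH - 1) * Real.log a) ≤ diagCoherentInfo pH pV a := by
  have hpH : 0 < pH := hV.trans_le hVH
  have hqH : 0 < 1 - pH := sub_pos.mpr hH
  have hqV : 0 < 1 - pV := by linarith
  have hb : 0 < 1 - a := sub_pos.mpr ha1
  have hlog_transmitted : Real.log pV ≤ Real.log (pH * a + pV * (1 - a)) :=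
    Real.log_le_log hV (by nlinarith)
  have hlog_lost : Real.log ((1 - pH) * a + (1 - pV) * (1 - a)) ≤ 0 :=
    Real.log_nonpos (by positivity) (by nlinarith)
  have hlower := le_scaledBinEntropy (mul_pos hpH ha).le (mul_pos hV hb)
  have hupper := scaledBinEntropy_le (mul_pos hqH ha).le (mul_pos hqV hb)
  rw [Real.log_mul hpH.ne' ha.ne'] at hlower
  rw [Real.log_mul hqH.ne' ha.ne'] at hupper
  have h₁ := mul_le_mul_of_nonneg_left hlog_transmitted (mul_pos hpH ha).le
  have h₂ := mul_le_mul_of_nonneg_left hlog_lost (mul_pos hqH ha).le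
  unfold diagCoherentInfo
  linarith

theorem exists_diagCoherentInfo_pos (hV : 0 < pV) (hVH : pV ≤ pH) (hH : 1 / 2 < pH)
    (hH1 : pH < 1) : ∃ a ∈ Set.Ioo (0 : ℝ) 1, 0 < diagCoherentInfo pH pV a := by
  set C := pH * (Real.log pV - Real.log pH) + (1 - pH) * (Real.log (1 - pH) - 1)
  have hlog : ∀ᶠ a in 𝓝[>] (0 : ℝ), Real.log a < C / (2 * pH - 1) :=
    Real.tendsto_log_nhdsGT_zero.eventually_lt_atBot _
  obtain ⟨a, ha_log, ha⟩ := (hlog.and (Ioo_mem_nhdsGT one_pos)).exists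
  refine ⟨a, ha, lt_of_lt_of_le (mul_pos ha.1 ?_) (le_diagCoherentInfo hV hVH hH1 ha.1 ha.2)⟩
  rw [lt_div_iff₀ (by linarith)] at ha_log
  linarith

theorem exists_isMaxOn_diagCoherentInfo (hV : 0 < pV) (hVH : pV ≤ pH) (hH : 1 / 2 < pH)
    (hH1 : pH < 1) :
    ∃ a ∈ Set.Ioo (0 : ℝ) 1, IsMaxOn (diagCoherentInfo pH pV) (Set.Icc 0 1) a := by
  obtain ⟨a, ha, hmax⟩ := isCompact_Icc.exists_isMaxOn (Set.nonempty_Icc.mpr zero_le_one)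
    (continuous_diagCoherentInfo (pH := pH) (pV := pV)).continuousOn
  obtain ⟨b, hb, hb_pos⟩ := exists_diagCoherentInfo_pos hV hVH hH hH1
  have ha_pos : 0 < diagCoherentInfo pH pV a := hb_pos.trans_le (hmax (Set.Ioo_subset_Icc_self hb))
  refine ⟨a, ⟨ha.1.lt_of_ne ?_, ha.2.lt_of_ne ?_⟩, hmax⟩
  · rintro rfl
    exact ha_pos.ne' diagCoherentInfo_zero
  · rintro rfl
    exact ha_pos.ne' diagCoherentInfo_one

end DiagCoherentInfo

section PdlMap

/-- The polarization dependent loss operation `Λ σ = A σ Aᴴ` with `A = diag (√p, √q)`. -/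
noncomputable def pdlMap (p q : ℝ) (σ : Matrix (Fin 2) (Fin 2) ℂ) : Matrix (Fin 2) (Fin 2) ℂ :=
  diagonal ![(√p : ℂ), (√q : ℂ)] * σ * (diagonal ![(√p : ℂ), (√q : ℂ)])ᴴ

variable {p q pH pV : ℝ} {σ A : Matrix (Fin 2) (Fin 2) ℂ}

theorem ofReal_sqrt_mul_self {t : ℝ} (ht : 0 ≤ t) : (√t : ℂ) * √t = t :=
  mod_cast Real.mul_self_sqrt ht

theorem posSemidef_pdlMap (hσ : σ.PosSemidef) : (pdlMap p q σ).PosSemidef :=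
  hσ.mul_mul_conjTranspose_same _

theorem pdlMap_eq (hp : 0 ≤ p) (hq : 0 ≤ q) (σ : Matrix (Fin 2) (Fin 2) ℂ) :
    pdlMap p q σ = !![p * σ 0 0, √(p * q) * σ 0 1; √(p * q) * σ 1 0, q * σ 1 1] := by
  have hp' := ofReal_sqrt_mul_self hp
  have hq' := ofReal_sqrt_mul_self hq
  rw [Real.sqrt_mul hp, pdlMap]
  ext i j
  fin_cases i <;> fin_cases j <;> simp [diagonal_conjTranspose] <;> grind

theorem trace_pdlMap (hp : 0 ≤ p) (hq : 0 ≤ q) (σ : Matrix (Fin 2) (Fin 2) ℂ) :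
    (pdlMap p q σ).trace = p * σ 0 0 + q * σ 1 1 := by
  simp [pdlMap_eq hp hq, trace_fin_two]

theorem trace_pdlMap_re (hp : 0 ≤ p) (hq : 0 ≤ q) (σ : Matrix (Fin 2) (Fin 2) ℂ) :
    (pdlMap p q σ).trace.re = p * (σ 0 0).re + q * (σ 1 1).re := by
  simp [trace_pdlMap hp hq]

theorem coe_re_trace_pdlMap (hσ : σ.PosSemidef) :
    ((pdlMap p q σ).trace.re : ℂ) = (pdlMap p q σ).trace :=
  (Complex.eq_re_of_ofReal_le (posSemidef_pdlMap hσ).trace_nonneg).symm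

theorem det_pdlMap (hp : 0 ≤ p) (hq : 0 ≤ q) (σ : Matrix (Fin 2) (Fin 2) ℂ) :
    (pdlMap p q σ).det = (p * q : ℝ) * σ.det := by
  have hpq := ofReal_sqrt_mul_self (mul_nonneg hp hq)
  rw [Complex.ofReal_mul] at hpq ⊢
  simp only [pdlMap_eq hp hq, det_fin_two, of_apply, cons_val', cons_val_zero, cons_val_one,
    cons_val_fin_one]
  linear_combination (-(σ 0 1 * σ 1 0)) * hpq

/-- The entropy `tr A * S (A / tr A)` of an unnormalized state `A`: the entropy that remains once
the weight `tr A` is known. -/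
noncomputable def scaledEntropy {n : Type*} [Fintype n] [DecidableEq n] (A : Matrix n n ℂ) : ℝ :=
  vnEnt A - negMulLog A.trace.re

theorem exists_scaledEntropy_eq_scaledBinEntropy (hA : A.PosSemidef) :
    ∃ x y : ℝ, 0 ≤ x ∧ 0 ≤ y ∧ x + y = A.trace.re ∧ A.det = (x * y : ℝ) ∧
      scaledEntropy A = scaledBinEntropy x y := by
  obtain ⟨x, y, hx, hxy, htr, hdet, hent⟩ := exists_eigenvalues_fin_two hA
  exact ⟨x, y, hx, hx.trans hxy, by simp [htr], hdet, by
    simp [scaledEntropy, scaledBinEntropy, hent, htr]⟩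

theorem scaledEntropy_le_scaledBinEntropy {x y : ℝ} (hA : A.PosSemidef) (hx : 0 ≤ x) (hy : 0 ≤ y)
    (hdet : A.det = (x * y : ℝ)) (htr : x + y ≤ A.trace.re) :
    scaledEntropy A ≤ scaledBinEntropy x y := by
  obtain ⟨u, v, hu, hv, huv, hdet', hent⟩ := exists_scaledEntropy_eq_scaledBinEntropy hA
  rw [hent]
  exact scaledBinEntropy_le_of_mul_eq_of_add_le hx hy hu hv (mod_cast hdet.symm.trans hdet')
    (huv ▸ htr)

theorem scaledBinEntropy_le_scaledEntropy {x y : ℝ} (hA : A.PosSemidef) (hx : 0 ≤ x) (hy : 0 ≤ y)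
    (hdet : A.det = (x * y : ℝ)) (htr : A.trace.re ≤ x + y) :
    scaledBinEntropy x y ≤ scaledEntropy A := by
  obtain ⟨u, v, hu, hv, huv, hdet', hent⟩ := exists_scaledEntropy_eq_scaledBinEntropy hA
  rw [hent]
  exact scaledBinEntropy_le_of_mul_eq_of_add_le hu hv hx hy (mod_cast hdet'.symm.trans hdet)
    (huv ▸ htr)

theorem le_re_apply_zero_zero {x y : ℝ} (hA : A.IsHermitian) (hxy : x ≤ y)
    (htr : A.trace = (x + y : ℝ)) (hdet : A.det = (x * y : ℝ)) : x ≤ (A 0 0).re := by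
  have hre : ∀ i, ((A i i).re : ℂ) = A i i := hA.coe_re_apply_self
  have hsymm : A 0 1 * A 1 0 = Complex.normSq (A 0 1) := by
    rw [← hA.apply 1 0, Complex.star_def, Complex.mul_conj]
  rw [trace_fin_two, ← hre 0, ← hre 1] at htr
  rw [det_fin_two, ← hre 0, ← hre 1, hsymm] at hdet
  norm_cast at htr hdet
  have hprod : (x - (A 0 0).re) * (y - (A 0 0).re) = -Complex.normSq (A 0 1) := by
    linear_combination (A 0 0).re * htr - hdet
  by_contra! hlt
  linarith [Complex.normSq_nonneg (A 0 1),
    mul_pos (sub_pos.mpr hlt) (sub_pos.mpr (hlt.trans_le hxy))]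

theorem GammaPDL_eq_reindex_fromBlocks (hH : pH ∈ Set.Icc 0 1) (hV : pV ∈ Set.Icc 0 1)
    (σ : Matrix (Fin 2) (Fin 2) ℂ) :
    GammaPDL pH pV σ = reindex finSumFinEquiv finSumFinEquiv
      (fromBlocks (pdlMap pH pV σ) 0 0
        (diagonal fun _ : Fin 1 => (pdlMap (1 - pH) (1 - pV) σ).trace)) := by
  rw [trace_pdlMap (sub_nonneg.mpr hH.2) (sub_nonneg.mpr hV.2), pdlMap_eq hH.1 hV.1]
  ext i j
  fin_cases i <;> fin_cases j <;>
    simp [GammaPDL, trace_fin_two, finSumFinEquiv, Fin.addCases, Fin.subNat, Fin.castLT]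
  ring

theorem GammaPDLc_eq_reindex_fromBlocks (hH : pH ∈ Set.Icc 0 1) (hV : pV ∈ Set.Icc 0 1)
    (σ : Matrix (Fin 2) (Fin 2) ℂ) :
    GammaPDLc pH pV σ = reindex finSumFinEquiv finSumFinEquiv
      (fromBlocks (diagonal fun _ : Fin 1 => (pdlMap pH pV σ).trace) 0 0
        (pdlMap (1 - pH) (1 - pV) σ)) := by
  rw [trace_pdlMap hH.1 hV.1, pdlMap_eq (sub_nonneg.mpr hH.2) (sub_nonneg.mpr hV.2)]
  ext i j
  fin_cases i <;> fin_cases j <;>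
    simp [GammaPDLc, finSumFinEquiv, Fin.addCases, Fin.subNat, Fin.castLT]

theorem vnEnt_GammaPDL (hH : pH ∈ Set.Icc 0 1) (hV : pV ∈ Set.Icc 0 1) (hσ : σ.PosSemidef) :
    vnEnt (GammaPDL pH pV σ) =
      vnEnt (pdlMap pH pV σ) + negMulLog (pdlMap (1 - pH) (1 - pV) σ).trace.re := by
  have hΛ := (posSemidef_pdlMap (p := pH) (q := pV) hσ).isHermitian
  have hloss := isHermitian_diagonal_ofReal
    fun _ : Fin 1 => (pdlMap (1 - pH) (1 - pV) σ).trace.re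
  rw [GammaPDL_eq_reindex_fromBlocks hH hV, ← coe_re_trace_pdlMap hσ,
    vnEnt_reindex (hΛ.fromBlocks (by simp) hloss), vnEnt_fromBlocks_zero hΛ hloss, vnEnt_diagonal]
  simp

theorem vnEnt_GammaPDLc (hH : pH ∈ Set.Icc 0 1) (hV : pV ∈ Set.Icc 0 1) (hσ : σ.PosSemidef) :
    vnEnt (GammaPDLc pH pV σ) =
      negMulLog (pdlMap pH pV σ).trace.re + vnEnt (pdlMap (1 - pH) (1 - pV) σ) := by
  have hΛ := (posSemidef_pdlMap (p := 1 - pH) (q := 1 - pV) hσ).isHermitian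
  have hkept := isHermitian_diagonal_ofReal fun _ : Fin 1 => (pdlMap pH pV σ).trace.re
  rw [GammaPDLc_eq_reindex_fromBlocks hH hV, ← coe_re_trace_pdlMap hσ,
    vnEnt_reindex (hkept.fromBlocks (by simp) hΛ), vnEnt_fromBlocks_zero hkept hΛ, vnEnt_diagonal]
  simp

theorem coherentInfo_eq_scaledEntropy_sub (hH : pH ∈ Set.Icc 0 1) (hV : pV ∈ Set.Icc 0 1)
    (hσ : σ.PosSemidef) :
    vnEnt (GammaPDL pH pV σ) - vnEnt (GammaPDLc pH pV σ) =
      scaledEntropy (pdlMap pH pV σ) - scaledEntropy (pdlMap (1 - pH) (1 - pV) σ) := by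
  rw [vnEnt_GammaPDL hH hV hσ, vnEnt_GammaPDLc hH hV hσ, scaledEntropy, scaledEntropy]
  ring

-- Replacing `σ` by `diag (x, y)`, with `x ≤ y` its eigenvalues, keeps both determinants and moves
-- weight from the horizontal to the vertical polarization, hence from the transmitted to the
-- lost light.
theorem coherentInfo_le_diagCoherentInfo {x y : ℝ} (hH : pH ≤ 1) (hV : 0 ≤ pV) (hVH : pV ≤ pH)
    (hσ : σ.PosSemidef) (hx : 0 ≤ x) (hxy : x ≤ y) (hadd : x + y = 1) (hsum : σ.trace = (x + y : ℝ))
    (hprod : σ.det = (x * y : ℝ)) :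
    vnEnt (GammaPDL pH pV σ) - vnEnt (GammaPDLc pH pV σ) ≤ diagCoherentInfo pH pV x := by
  have hy : 0 ≤ y := hx.trans hxy
  have hqH : 0 ≤ 1 - pH := sub_nonneg.mpr hH
  have hpH : 0 ≤ pH := hV.trans hVH
  have hqV : 0 ≤ 1 - pV := by linarith
  have hdet : ∀ {p q : ℝ}, 0 ≤ p → 0 ≤ q → (pdlMap p q σ).det = (p * x * (q * y) : ℝ) :=
    fun hp hq => by
      rw [det_pdlMap hp hq, hprod]
      push_cast
      ring
  have htr : (σ 0 0).re + (σ 1 1).re = x + y := by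
    simpa [trace_fin_two] using congrArg Complex.re hsum
  have hgap : 0 ≤ (pH - pV) * ((σ 0 0).re - x) := mul_nonneg (sub_nonneg.mpr hVH)
    (sub_nonneg.mpr (le_re_apply_zero_zero hσ.isHermitian hxy hsum hprod))
  have hσ11 : (σ 1 1).re = x + y - (σ 0 0).re := by linarith
  have htransmitted := scaledEntropy_le_scaledBinEntropy (posSemidef_pdlMap hσ)
    (mul_nonneg hpH hx) (mul_nonneg hV hy) (hdet hpH hV)
    (by rw [trace_pdlMap_re hpH hV, hσ11]; linarith)
  have hlost := scaledBinEntropy_le_scaledEntropy (posSemidef_pdlMap hσ)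
    (mul_nonneg hqH hx) (mul_nonneg hqV hy) (hdet hqH hqV)
    (by rw [trace_pdlMap_re hqH hqV, hσ11]; linarith)
  rw [coherentInfo_eq_scaledEntropy_sub ⟨hpH, hH⟩ ⟨hV, sub_nonneg.mp hqV⟩ hσ, diagCoherentInfo,
    ← hadd, add_sub_cancel_left, hadd]
  exact sub_le_sub htransmitted hlost

theorem exists_coherentInfo_le_diagCoherentInfo (hH : pH ≤ 1) (hV : 0 ≤ pV) (hVH : pV ≤ pH)
    (hσ : σ.PosSemidef) (htr : σ.trace = 1) :
    ∃ x ∈ Set.Icc (0 : ℝ) 1,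
      vnEnt (GammaPDL pH pV σ) - vnEnt (GammaPDLc pH pV σ) ≤ diagCoherentInfo pH pV x := by
  obtain ⟨x, y, hx, hxy, hsum, hprod, -⟩ := exists_eigenvalues_fin_two hσ
  have hadd : x + y = 1 := mod_cast (htr.symm.trans hsum).symm
  exact ⟨x, ⟨hx, by linarith⟩,
    coherentInfo_le_diagCoherentInfo hH hV hVH hσ hx hxy hadd hsum hprod⟩

end PdlMap

section KrausMap

variable {ι κ m m' n n' : Type*} [Fintype ι] [Fintype κ]

theorem sum_kronecker_sum (X : ι → Matrix m n ℂ) (Y : κ → Matrix m' n' ℂ) :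
    (∑ i, X i) ⊗ₖ (∑ j, Y j) = ∑ i : ι × κ, X i.1 ⊗ₖ Y i.2 := by
  ext
  simp only [Matrix.sum_apply, kroneckerMap_apply, Finset.sum_mul_sum, Fintype.sum_prod_type]

/-- The Kraus operators of the tensor product of two channels. -/
noncomputable def krausTensor (K : ι → Matrix m n ℂ) (L : κ → Matrix m' n' ℂ) :
    ι × κ → Matrix (m × m') (n × n') ℂ :=
  fun i => K i.1 ⊗ₖ L i.2

theorem sum_conjTranspose_mul_krausTensor [DecidableEq n] [DecidableEq n'] [Fintype m] [Fintype m']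
    {K : ι → Matrix m n ℂ} {L : κ → Matrix m' n' ℂ} (hK : ∑ i, (K i)ᴴ * K i = 1)
    (hL : ∑ j, (L j)ᴴ * L j = 1) : ∑ i, (krausTensor K L i)ᴴ * krausTensor K L i = 1 := by
  have h := sum_kronecker_sum (fun i => (K i)ᴴ * K i) fun j => (L j)ᴴ * L j
  rw [hK, hL, one_kronecker_one] at h
  simp only [krausTensor, conjTranspose_kronecker, ← Matrix.mul_kronecker_mul, h]

variable [Fintype n] [Fintype n']

/-- The completely positive map `ρ ↦ ∑ i, K i ρ (K i)ᴴ` with Kraus operators `K`. -/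
noncomputable def krausMap (K : ι → Matrix m n ℂ) : Matrix n n ℂ →ₗ[ℂ] Matrix m m ℂ where
  toFun ρ := ∑ i, K i * ρ * (K i)ᴴ
  map_add' X Y := by simp only [Matrix.mul_add, Matrix.add_mul, Finset.sum_add_distrib]
  map_smul' c X := by
    simp only [Matrix.mul_smul, Matrix.smul_mul, Finset.smul_sum, RingHom.id_apply]

theorem krausMap_apply (K : ι → Matrix m n ℂ) (ρ : Matrix n n ℂ) :
    krausMap K ρ = ∑ i, K i * ρ * (K i)ᴴ :=
  rfl

theorem krausMap_krausTensor_apply (K : ι → Matrix m n ℂ) (L : κ → Matrix m' n' ℂ)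
    (ρ : Matrix (n × n') (n × n') ℂ) :
    krausMap (krausTensor K L) ρ = ∑ i, ∑ j, (K i ⊗ₖ L j) * ρ * (K i ⊗ₖ L j)ᴴ :=
  Fintype.sum_prod_type _

theorem krausMap_krausTensor_kronecker (K : ι → Matrix m n ℂ) (L : κ → Matrix m' n' ℂ)
    (X : Matrix n n ℂ) (Y : Matrix n' n' ℂ) :
    krausMap (krausTensor K L) (X ⊗ₖ Y) = krausMap K X ⊗ₖ krausMap L Y := by
  simp only [krausMap_apply, krausTensor, sum_kronecker_sum, conjTranspose_kronecker,
    Matrix.mul_kronecker_mul]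

theorem posSemidef_krausMap [Finite m] (K : ι → Matrix m n ℂ) {ρ : Matrix n n ℂ}
    (hρ : ρ.PosSemidef) : (krausMap K ρ).PosSemidef :=
  posSemidef_sum _ fun i _ => hρ.mul_mul_conjTranspose_same (K i)

theorem trace_krausMap [DecidableEq n] [Fintype m] {K : ι → Matrix m n ℂ}
    (hK : ∑ i, (K i)ᴴ * K i = 1) (ρ : Matrix n n ℂ) : (krausMap K ρ).trace = ρ.trace := by
  calc (krausMap K ρ).trace = ∑ i, ((K i)ᴴ * K i * ρ).trace :=
        (trace_sum _ _).trans (Finset.sum_congr rfl fun i _ => trace_mul_cycle _ _ _)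
    _ = ρ.trace := by rw [← trace_sum, ← Finset.sum_mul, hK, one_mul]

theorem bddAbove_coherentInfo [DecidableEq n] [Fintype m] [DecidableEq m] [Fintype m']
    [DecidableEq m'] (K : ι → Matrix m n ℂ) {L : κ → Matrix m' n ℂ} (hL : ∑ j, (L j)ᴴ * L j = 1) :
    BddAbove {x : ℝ | ∃ ρ : Matrix n n ℂ, ρ.PosSemidef ∧ ρ.trace = 1 ∧
      x = vnEnt (krausMap K ρ) - vnEnt (krausMap L ρ)} := by
  refine ⟨Fintype.card m, ?_⟩
  rintro _ ⟨ρ, hρ, htr, rfl⟩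
  have hK_le := vnEnt_le_card (posSemidef_krausMap K hρ)
  have hL_nonneg := vnEnt_nonneg (posSemidef_krausMap L hρ) ((trace_krausMap hL ρ).trans htr)
  linarith

end KrausMap

section TwoLetter

/-- The state `diag (a, 1 - a) ⊗ diag (a, 1 - a)` with its two middle levels `|HV⟩`, `|VH⟩`, both
of weight `a (1 - a)`, made fully coherent. -/
noncomputable def twoLetterState (a : ℝ) : Matrix (Fin 2 × Fin 2) (Fin 2 × Fin 2) ℂ :=
  diagonal ![(a : ℂ), ((1 - a : ℝ) : ℂ)] ⊗ₖ diagonal ![(a : ℂ), ((1 - a : ℝ) : ℂ)]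
    + ((a * (1 - a) : ℝ) : ℂ) • (single 0 1 (1 : ℂ) ⊗ₖ single 1 0 (1 : ℂ)
      + single 1 0 (1 : ℂ) ⊗ₖ single 0 1 (1 : ℂ))

variable {ι m : Type*} [Fintype ι] {pH pV a : ℝ}

theorem trace_twoLetterState (a : ℝ) : (twoLetterState a).trace = 1 := by
  simp [twoLetterState, trace_kronecker]

theorem twoLetterState_eq_sum_vecMulVec (a : ℝ) :
    twoLetterState a =
      (a ^ 2 : ℝ) • vecMulVec (Pi.single (0, 0) 1) (star (Pi.single (0, 0) 1))
      + ((1 - a) ^ 2 : ℝ) • vecMulVec (Pi.single (1, 1) 1) (star (Pi.single (1, 1) 1))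
      + (a * (1 - a)) • vecMulVec (Pi.single (0, 1) 1 + Pi.single (1, 0) 1)
        (star (Pi.single (0, 1) 1 + Pi.single (1, 0) 1)) := by
  unfold twoLetterState
  ext ⟨i, j⟩ ⟨k, l⟩
  fin_cases i <;> fin_cases j <;> fin_cases k <;> fin_cases l <;>
    simp [vecMulVec_apply, pow_two, mul_comm]

theorem posSemidef_twoLetterState (h0 : 0 ≤ a) (h1 : a ≤ 1) : (twoLetterState a).PosSemidef := by
  rw [twoLetterState_eq_sum_vecMulVec]
  have hpsd := fun v : Fin 2 × Fin 2 → ℂ => posSemidef_vecMulVec_self_star v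
  exact (((hpsd _).smul (sq_nonneg a)).add ((hpsd _).smul (sq_nonneg (1 - a)))).add
    ((hpsd _).smul (mul_nonneg h0 (sub_nonneg.mpr h1)))

theorem krausMap_twoLetterState [DecidableEq m] {K : ι → Matrix m (Fin 2) ℂ} {d : m → ℝ}
    {p q : m} {r : ℝ}
    (hdiag : krausMap K (diagonal ![(a : ℂ), ((1 - a : ℝ) : ℂ)]) = diagonal fun i => (d i : ℂ))
    (h01 : krausMap K (single 0 1 1) = single p q (r : ℂ))
    (h10 : krausMap K (single 1 0 1) = single q p (r : ℂ)) :
    krausMap (krausTensor K K) (twoLetterState a) =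
      diagonal (fun i : m × m => ((d i.1 * d i.2 : ℝ) : ℂ))
        + (single (p, q) (q, p) ((a * (1 - a) * r ^ 2 : ℝ) : ℂ)
          + single (q, p) (p, q) ((a * (1 - a) * r ^ 2 : ℝ) : ℂ)) := by
  simp only [twoLetterState, map_add, map_smul, krausMap_krausTensor_kronecker, hdiag, h01, h10]
  simp only [diagonal_kronecker_diagonal, single_kronecker_single, smul_add, smul_single,
    smul_eq_mul, Complex.ofReal_mul, pow_two]

theorem vnEnt_krausMap_twoLetterState [Fintype m] [DecidableEq m] {K : ι → Matrix m (Fin 2) ℂ}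
    {d : m → ℝ} {p q : m} {r : ℝ} (hpq : p ≠ q)
    (hdiag : krausMap K (diagonal ![(a : ℂ), ((1 - a : ℝ) : ℂ)]) = diagonal fun i => (d i : ℂ))
    (h01 : krausMap K (single 0 1 1) = single p q (r : ℂ))
    (h10 : krausMap K (single 1 0 1) = single q p (r : ℂ))
    (hsum : ∑ i, d i = 1) (hprod : d p * d q = a * (1 - a) * r ^ 2) :
    vnEnt (krausMap (krausTensor K K) (twoLetterState a)) =
      2 * ∑ i, negMulLog (d i) - 2 * (a * (1 - a) * r ^ 2) * Real.log 2 := by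
  rw [krausMap_twoLetterState hdiag h01 h10,
    vnEnt_diagonal_add_single (f := fun i : m × m => d i.1 * d i.2) (p := (p, q)) (q := (q, p))
      (by simp [hpq]) hprod ((mul_comm _ _).trans hprod),
    sum_negMulLog_mul hsum hsum, ← two_mul]

theorem krausMap_KrPDL (hH : pH ∈ Set.Icc 0 1) (hV : pV ∈ Set.Icc 0 1)
    (σ : Matrix (Fin 2) (Fin 2) ℂ) : krausMap (KrPDL pH pV) σ = GammaPDL pH pV σ := by
  have hpH := ofReal_sqrt_mul_self hH.1
  have hpV := ofReal_sqrt_mul_self hV.1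
  have hqH := ofReal_sqrt_mul_self (sub_nonneg.mpr hH.2)
  have hqV := ofReal_sqrt_mul_self (sub_nonneg.mpr hV.2)
  rw [Complex.ofReal_sub, Complex.ofReal_one] at hqH hqV
  rw [krausMap_apply, GammaPDL, Real.sqrt_mul hH.1]
  ext i j
  simp only [Matrix.sum_apply, Matrix.mul_apply, Fin.sum_univ_three, Fin.sum_univ_two,
    conjTranspose_apply]
  fin_cases i <;> fin_cases j <;> simp [KrPDL, trace_fin_two] <;> grind

theorem krausMap_LrPDL (hH : pH ∈ Set.Icc 0 1) (hV : pV ∈ Set.Icc 0 1)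
    (σ : Matrix (Fin 2) (Fin 2) ℂ) : krausMap (LrPDL pH pV) σ = GammaPDLc pH pV σ := by
  have hpH := ofReal_sqrt_mul_self hH.1
  have hpV := ofReal_sqrt_mul_self hV.1
  have hqH := ofReal_sqrt_mul_self (sub_nonneg.mpr hH.2)
  have hqV := ofReal_sqrt_mul_self (sub_nonneg.mpr hV.2)
  rw [Complex.ofReal_sub, Complex.ofReal_one] at hqH hqV
  rw [krausMap_apply, GammaPDLc, Real.sqrt_mul (sub_nonneg.mpr hH.2)]
  ext i j
  simp only [Matrix.sum_apply, Matrix.mul_apply, Fin.sum_univ_three, Fin.sum_univ_two,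
    conjTranspose_apply]
  fin_cases i <;> fin_cases j <;> simp [LrPDL] <;> grind

theorem sum_conjTranspose_mul_LrPDL (hH : pH ∈ Set.Icc 0 1) (hV : pV ∈ Set.Icc 0 1) :
    ∑ i, (LrPDL pH pV i)ᴴ * LrPDL pH pV i = 1 := by
  have hpH := ofReal_sqrt_mul_self hH.1
  have hpV := ofReal_sqrt_mul_self hV.1
  have hqH := ofReal_sqrt_mul_self (sub_nonneg.mpr hH.2)
  have hqV := ofReal_sqrt_mul_self (sub_nonneg.mpr hV.2)
  rw [Complex.ofReal_sub, Complex.ofReal_one] at hqH hqV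
  ext i j
  simp only [Matrix.sum_apply, Matrix.mul_apply, Fin.sum_univ_three, conjTranspose_apply]
  fin_cases i <;> fin_cases j <;> simp [LrPDL] <;> grind

theorem GammaPDL_diagonal (pH pV a b : ℝ) :
    GammaPDL pH pV (diagonal ![(a : ℂ), (b : ℂ)]) =
      diagonal fun i => ((![pH * a, pV * b, (1 - pH) * a + (1 - pV) * b] i : ℝ) : ℂ) := by
  ext i j
  fin_cases i <;> fin_cases j <;> simp [GammaPDL]
  ring

theorem GammaPDLc_diagonal (pH pV a b : ℝ) :
    GammaPDLc pH pV (diagonal ![(a : ℂ), (b : ℂ)]) =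
      diagonal fun i => ((![pH * a + pV * b, (1 - pH) * a, (1 - pV) * b] i : ℝ) : ℂ) := by
  ext i j
  fin_cases i <;> fin_cases j <;> simp [GammaPDLc]

theorem GammaPDL_single_zero_one (pH pV : ℝ) :
    GammaPDL pH pV (single 0 1 1) = single 0 1 (√(pH * pV) : ℂ) := by
  ext i j
  fin_cases i <;> fin_cases j <;> simp [GammaPDL]

theorem GammaPDL_single_one_zero (pH pV : ℝ) :
    GammaPDL pH pV (single 1 0 1) = single 1 0 (√(pH * pV) : ℂ) := by
  ext i j
  fin_cases i <;> fin_cases j <;> simp [GammaPDL]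

theorem GammaPDLc_single_zero_one (pH pV : ℝ) :
    GammaPDLc pH pV (single 0 1 1) = single 1 2 (√((1 - pH) * (1 - pV)) : ℂ) := by
  ext i j
  fin_cases i <;> fin_cases j <;> simp [GammaPDLc]

theorem GammaPDLc_single_one_zero (pH pV : ℝ) :
    GammaPDLc pH pV (single 1 0 1) = single 2 1 (√((1 - pH) * (1 - pV)) : ℂ) := by
  ext i j
  fin_cases i <;> fin_cases j <;> simp [GammaPDLc]

theorem vnEnt_krausMap_KrPDL_twoLetterState (hH : pH ∈ Set.Icc 0 1) (hV : pV ∈ Set.Icc 0 1)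
    (a : ℝ) :
    vnEnt (krausMap (krausTensor (KrPDL pH pV) (KrPDL pH pV)) (twoLetterState a)) =
      2 * (negMulLog (pH * a) + negMulLog (pV * (1 - a))
        + negMulLog ((1 - pH) * a + (1 - pV) * (1 - a)))
      - 2 * (a * (1 - a) * (pH * pV)) * Real.log 2 := by
  have hr : √(pH * pV) ^ 2 = pH * pV := Real.sq_sqrt (mul_nonneg hH.1 hV.1)
  have hent := vnEnt_krausMap_twoLetterState zero_ne_one
    ((krausMap_KrPDL hH hV _).trans (GammaPDL_diagonal pH pV a (1 - a)))
    ((krausMap_KrPDL hH hV _).trans (GammaPDL_single_zero_one pH pV))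
    ((krausMap_KrPDL hH hV _).trans (GammaPDL_single_one_zero pH pV))
    (by simp [Fin.sum_univ_three]; ring) (by simp [hr]; ring)
  simpa [Fin.sum_univ_three, hr] using hent

theorem vnEnt_krausMap_LrPDL_twoLetterState (hH : pH ∈ Set.Icc 0 1) (hV : pV ∈ Set.Icc 0 1)
    (a : ℝ) :
    vnEnt (krausMap (krausTensor (LrPDL pH pV) (LrPDL pH pV)) (twoLetterState a)) =
      2 * (negMulLog (pH * a + pV * (1 - a)) + negMulLog ((1 - pH) * a)
        + negMulLog ((1 - pV) * (1 - a)))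
      - 2 * (a * (1 - a) * ((1 - pH) * (1 - pV))) * Real.log 2 := by
  have hr : √((1 - pH) * (1 - pV)) ^ 2 = (1 - pH) * (1 - pV) :=
    Real.sq_sqrt (mul_nonneg (sub_nonneg.mpr hH.2) (sub_nonneg.mpr hV.2))
  have hent := vnEnt_krausMap_twoLetterState (show (1 : Fin 3) ≠ 2 by decide)
    ((krausMap_LrPDL hH hV _).trans (GammaPDLc_diagonal pH pV a (1 - a)))
    ((krausMap_LrPDL hH hV _).trans (GammaPDLc_single_zero_one pH pV))
    ((krausMap_LrPDL hH hV _).trans (GammaPDLc_single_one_zero pH pV))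
    (by simp [Fin.sum_univ_three]; ring) (by simp [hr]; ring)
  simpa [Fin.sum_univ_three, hr] using hent

theorem coherentInfo_twoLetterState (hH : pH ∈ Set.Icc 0 1) (hV : pV ∈ Set.Icc 0 1) (a : ℝ) :
    vnEnt (krausMap (krausTensor (KrPDL pH pV) (KrPDL pH pV)) (twoLetterState a))
        - vnEnt (krausMap (krausTensor (LrPDL pH pV) (LrPDL pH pV)) (twoLetterState a)) =
      2 * diagCoherentInfo pH pV a + 2 * (a * (1 - a)) * (1 - pH - pV) * Real.log 2 := by
  rw [vnEnt_krausMap_KrPDL_twoLetterState hH hV, vnEnt_krausMap_LrPDL_twoLetterState hH hV]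
  simp only [diagCoherentInfo, scaledBinEntropy]
  ring

end TwoLetter

theorem sSup_coherentInfo_le {pH pV b : ℝ} (hH : pH ≤ 1) (hV : 0 ≤ pV) (hVH : pV ≤ pH)
    (hb : ∀ x ∈ Set.Icc (0 : ℝ) 1, diagCoherentInfo pH pV x ≤ b) :
    sSup {x : ℝ | ∃ σ : Matrix (Fin 2) (Fin 2) ℂ, σ.PosSemidef ∧ σ.trace = 1 ∧
      x = vnEnt (GammaPDL pH pV σ) - vnEnt (GammaPDLc pH pV σ)} ≤ b := by
  have hpure : (diagonal ![(1 : ℂ), 0]).PosSemidef := by simp [posSemidef_diagonal_iff]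
  refine csSup_le ⟨_, diagonal ![1, 0], hpure, by simp, rfl⟩ ?_
  rintro _ ⟨σ, hσ, htr, rfl⟩
  obtain ⟨x, hx, hle⟩ := exists_coherentInfo_le_diagCoherentInfo hH hV hVH hσ htr
  exact hle.trans (hb x hx)

/-- for 1/2 < p_H < 1 and 0 < p_V < 1 − p_H, the two-letter coherent
information of the generalized erasure channel of the polarization dependent loss
operation is strictly superadditive. -/
theorem pdl_coherent_information_superadditive (pH pV : ℝ)
    (h1 : 1/2 < pH) (h2 : pH < 1) (h3 : 0 < pV) (h4 : pV < 1 - pH) :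
    2 * sSup {x : ℝ | ∃ σ : Matrix (Fin 2) (Fin 2) ℂ, σ.PosSemidef ∧ σ.trace = 1 ∧
        x = vnEnt (GammaPDL pH pV σ) - vnEnt (GammaPDLc pH pV σ)}
      < sSup {x : ℝ | ∃ ρ : Matrix (Fin 2 × Fin 2) (Fin 2 × Fin 2) ℂ,
          ρ.PosSemidef ∧ ρ.trace = 1 ∧
          x = vnEnt (∑ i, ∑ j, (KrPDL pH pV i ⊗ₖ KrPDL pH pV j) * ρ *
                (KrPDL pH pV i ⊗ₖ KrPDL pH pV j)ᴴ)
            - vnEnt (∑ i, ∑ j, (LrPDL pH pV i ⊗ₖ LrPDL pH pV j) * ρ *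
                (LrPDL pH pV i ⊗ₖ LrPDL pH pV j)ᴴ)} := by
  have hVH : pV ≤ pH := by linarith
  have hH : pH ∈ Set.Icc 0 1 := ⟨by linarith, h2.le⟩
  have hV : pV ∈ Set.Icc 0 1 := ⟨h3.le, by linarith⟩
  obtain ⟨a, ⟨ha0, ha1⟩, hmax⟩ := exists_isMaxOn_diagCoherentInfo h3 hVH h1 h2
  have one_letter := sSup_coherentInfo_le h2.le h3.le hVH hmax
  have gain : 0 < 2 * (a * (1 - a)) * (1 - pH - pV) * Real.log 2 := by
    have hgap : 0 < 1 - pH - pV := by linarith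
    exact mul_pos (mul_pos (mul_pos two_pos (mul_pos ha0 (sub_pos.mpr ha1))) hgap)
      (Real.log_pos one_lt_two)
  have hL := sum_conjTranspose_mul_LrPDL hH hV
  simp only [← krausMap_krausTensor_apply]
  refine lt_csSup_of_lt (bddAbove_coherentInfo _ (sum_conjTranspose_mul_krausTensor hL hL))
    ⟨twoLetterState a, posSemidef_twoLetterState ha0.le ha1.le, trace_twoLetterState a, rfl⟩ ?_
  rw [coherentInfo_twoLetterState hH hV]
  linarith
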